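/- If q is an even positive integer and f : ℕ → ℤ is Erdősian mod q, then Σ_{n=1}^q f(n) ≠ 0; consequently the partial sums Σ_{n=1}^N f(n)/n do not converge, and in particular the Erdős conjecture is true mod q for every even q. -/

import Mathlib

open Filter Topology Finset

/-- `f : ℕ → ℤ` is Erdősian mod `q`: periodic with period `q`, takes values `±1`
off multiples of `q`, and `0` on multiples of `q`. -/
def IsErdosian (q : ℕ) (f : ℕ → ℤ) : Prop :=
  (∀ n : ℕ, 1 ≤ n → f (n + q) = f n) ∧
  (∀ n : ℕ, 1 ≤ n → ¬ q ∣ n → f n = 1 ∨ f n = -1) ∧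
  (∀ n : ℕ, 1 ≤ n → q ∣ n → f n = 0)

/-- The Erdős conjecture is false mod `q`: there is an Erdősian function mod `q`
whose partial sums `∑_{n=1}^N f(n)/n` tend to `0`. -/
def ErdosConjectureFalse (q : ℕ) : Prop :=
  ∃ f : ℕ → ℤ, IsErdosian q f ∧
    Tendsto (fun N : ℕ => ∑ n ∈ Finset.Icc 1 N, (f n : ℝ) / n) atTop (nhds 0)

/-- The Erdős conjecture holds (is true) mod `q`. -/
def ErdosConjectureHolds (q : ℕ) : Prop := ¬ ErdosConjectureFalse q

/-!
If `∑ f(n)/n` converges, then Kronecker's lemma (Abel summation together with Cesàro averaging)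
gives `(f(1) + ⋯ + f(N))/N → 0`. For `f` of period `q` this average equals
`(f(1) + ⋯ + f(q))/q` whenever `q ∣ N`, so the sum over a period vanishes. But if `f` is Erdősian
and `q` is even, the sum over a period has `q - 1` odd terms and one zero term, so it is odd.
-/

section KroneckerLemma

theorem sum_range_succ_nsmul {M : Type*} [AddCommGroup M] (u : ℕ → M) (N : ℕ) :
    ∑ n ∈ range N, (n + 1) • u n =
      N • ∑ n ∈ range N, u n - ∑ i ∈ range N, ∑ n ∈ range i, u n := by
  induction N with
  | zero => simp
  | succ N ih =>
    rw [sum_range_succ, ih]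
    simp only [sum_range_succ, smul_add, add_smul, one_smul]
    abel

variable {E : Type*} [NormedAddCommGroup E] [NormedSpace ℝ E] {L : E}

theorem tendsto_inv_smul_sum_range_succ_nsmul {u : ℕ → E}
    (hu : Tendsto (fun N ↦ ∑ n ∈ range N, u n) atTop (𝓝 L)) :
    Tendsto (fun N : ℕ ↦ (N : ℝ)⁻¹ • ∑ n ∈ range N, (n + 1) • u n) atTop (𝓝 0) := by
  have hdiff := hu.sub hu.cesaro_smul
  rw [sub_self] at hdiff
  refine hdiff.congr' ?_
  filter_upwards [eventually_ne_atTop 0] with N hN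
  rw [sum_range_succ_nsmul, smul_sub, ← Nat.cast_smul_eq_nsmul ℝ N,
    inv_smul_smul₀ (Nat.cast_ne_zero.mpr hN)]

theorem tendsto_inv_smul_sum_range_of_tendsto_sum_inv_smul {g : ℕ → E}
    (hg : Tendsto (fun N ↦ ∑ n ∈ range N, ((n + 1 : ℕ) : ℝ)⁻¹ • g n) atTop (𝓝 L)) :
    Tendsto (fun N : ℕ ↦ (N : ℝ)⁻¹ • ∑ n ∈ range N, g n) atTop (𝓝 0) := by
  have hcancel (n : ℕ) : (n + 1) • ((n + 1 : ℕ) : ℝ)⁻¹ • g n = g n := by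
    rw [← Nat.cast_smul_eq_nsmul ℝ, smul_inv_smul₀ (Nat.cast_ne_zero.mpr n.succ_ne_zero)]
  simpa only [hcancel] using tendsto_inv_smul_sum_range_succ_nsmul hg

end KroneckerLemma

section Periodic

variable {q : ℕ}

theorem sum_range_mul_of_periodic {M : Type*} [AddCommMonoid M] {g : ℕ → M}
    (hg : Function.Periodic g q) (k : ℕ) :
    ∑ n ∈ range (k * q), g n = k • ∑ n ∈ range q, g n := by
  induction k with
  | zero => simp
  | succ k ih =>
    have hshift (n : ℕ) : g (k * q + n) = g n := by
      simpa only [smul_eq_mul, add_comm] using hg.nsmul k n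
    simp only [Nat.succ_mul, sum_range_add, ih, hshift, succ_nsmul]

theorem sum_range_period_eq_zero_of_tendsto_sum_inv_smul {E : Type*} [NormedAddCommGroup E]
    [NormedSpace ℝ E] {g : ℕ → E} {L : E} (hg : Function.Periodic g q)
    (hL : Tendsto (fun N ↦ ∑ n ∈ range N, ((n + 1 : ℕ) : ℝ)⁻¹ • g n) atTop (𝓝 L)) :
    ∑ n ∈ range q, g n = 0 := by
  rcases q.eq_zero_or_pos with rfl | hq
  · exact sum_range_zero g
  have hmultiples : Tendsto (fun k ↦ k * q) atTop atTop := tendsto_id.atTop_mul_const' hq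
  have hzero := (tendsto_inv_smul_sum_range_of_tendsto_sum_inv_smul hL).comp hmultiples
  have hmean : Tendsto (fun k : ℕ ↦ ((k * q : ℕ) : ℝ)⁻¹ • ∑ n ∈ range (k * q), g n) atTop
      (𝓝 ((q : ℝ)⁻¹ • ∑ n ∈ range q, g n)) := by
    refine tendsto_const_nhds.congr' ?_
    filter_upwards [eventually_ne_atTop 0] with k hk
    rw [sum_range_mul_of_periodic hg, ← Nat.cast_smul_eq_nsmul ℝ k, smul_smul, Nat.cast_mul,
      mul_inv_rev, inv_mul_cancel_right₀ (Nat.cast_ne_zero.mpr hk)]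
  have hmean_eq_zero := tendsto_nhds_unique hmean hzero
  exact (smul_eq_zero_iff_right (inv_ne_zero (Nat.cast_ne_zero.mpr hq.ne'))).mp hmean_eq_zero

end Periodic

theorem odd_sum_iff_odd_card_of_forall_odd {ι : Type*} {s : Finset ι} {f : ι → ℤ}
    (hf : ∀ i ∈ s, Odd (f i)) : Odd (∑ i ∈ s, f i) ↔ Odd #s := by
  have hcast : ((∑ i ∈ s, f i : ℤ) : ZMod 2) = (#s : ZMod 2) := by
    rw [Int.cast_sum, sum_congr rfl fun i hi ↦ ZMod.intCast_eq_one_iff_odd.mpr (hf i hi),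
      sum_const, nsmul_one]
  rw [← ZMod.intCast_eq_one_iff_odd, hcast, ZMod.natCast_eq_one_iff_odd]

theorem sum_Icc_one_eq_sum_range_succ {M : Type*} [AddCommMonoid M] (f : ℕ → M) (N : ℕ) :
    ∑ n ∈ Icc 1 N, f n = ∑ n ∈ range N, f (n + 1) := by
  rw [range_eq_Ico, sum_Ico_add' f 0 N 1, zero_add, Ico_add_one_right_eq_Icc]

namespace IsErdosian

variable {q : ℕ} {f : ℕ → ℤ}

theorem periodic_succ (hf : IsErdosian q f) : Function.Periodic (fun n ↦ f (n + 1)) q := by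
  intro n
  simpa only [add_right_comm] using hf.1 (n + 1) n.succ_pos

theorem odd_of_not_dvd (hf : IsErdosian q f) {n : ℕ} (hn : ¬ q ∣ n) : Odd (f n) := by
  have hn_pos : 0 < n := Nat.pos_of_ne_zero fun h ↦ hn (h ▸ dvd_zero q)
  rcases hf.2.1 n hn_pos hn with h | h <;> rw [h]
  · exact odd_one
  · exact odd_one.neg

theorem odd_sum_Icc_iff_even (hf : IsErdosian q f) (hq : 0 < q) :
    Odd (∑ n ∈ Icc 1 q, f n) ↔ Even q := by
  have hodd : ∀ n ∈ Ico 1 q, Odd (f n) := fun n hn ↦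
    hf.odd_of_not_dvd (Nat.not_dvd_of_pos_of_lt (mem_Ico.mp hn).1 (mem_Ico.mp hn).2)
  rw [← Ico_add_one_right_eq_Icc, sum_Ico_succ_top hq, hf.2.2 q hq dvd_rfl, add_zero,
    odd_sum_iff_odd_card_of_forall_odd hodd, Nat.card_Ico, Nat.odd_sub hq]
  simp

theorem sum_Icc_eq_zero_of_tendsto (hf : IsErdosian q f) {L : ℝ}
    (hL : Tendsto (fun N : ℕ ↦ ∑ n ∈ Icc 1 N, (f n : ℝ) / n) atTop (𝓝 L)) :
    ∑ n ∈ Icc 1 q, f n = 0 := by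
  have hperiodic : Function.Periodic (fun n ↦ (f (n + 1) : ℝ)) q :=
    hf.periodic_succ.comp (Int.cast : ℤ → ℝ)
  simp only [sum_Icc_one_eq_sum_range_succ, div_eq_inv_mul, ← smul_eq_mul] at hL
  rw [sum_Icc_one_eq_sum_range_succ]
  exact_mod_cast sum_range_period_eq_zero_of_tendsto_sum_inv_smul hperiodic hL

end IsErdosian

theorem erdos_true_even (q : ℕ) (h0 : 0 < q) (heven : Even q) :
    (∀ f : ℕ → ℤ, IsErdosian q f →
      (∑ n ∈ Finset.Icc 1 q, f n ≠ 0) ∧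
      ¬ ∃ L : ℝ, Tendsto (fun N : ℕ => ∑ n ∈ Finset.Icc 1 N, (f n : ℝ) / n)
        atTop (nhds L)) ∧
    ErdosConjectureHolds q := by
  have hsum_ne_zero (f : ℕ → ℤ) (hf : IsErdosian q f) : ∑ n ∈ Icc 1 q, f n ≠ 0 := by
    intro hsum
    have hodd := (hf.odd_sum_Icc_iff_even h0).mpr heven
    exact Int.not_odd_zero (hsum ▸ hodd)
  constructor
  · intro f hf
    exact ⟨hsum_ne_zero f hf, fun ⟨_, hL⟩ ↦ hsum_ne_zero f hf (hf.sum_Icc_eq_zero_of_tendsto hL)⟩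
  · rintro ⟨f, hf, hlim⟩
    exact hsum_ne_zero f hf (hf.sum_Icc_eq_zero_of_tendsto hlim)
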